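/- Let a ∈ {0,1}^{n×n} be the symmetric, zero-diagonal adjacency matrix of a simple undirected graph, μ ≥ 0, and L(θ; a, μ) = ∑_{1≤i<j≤n} a_{ij} cos(θ_i − θ_j) + (μ/2) ∑_{i=1}^n sin²θ_i. Suppose θ̲ ∈ ℝ^n is a global minimizer of L(·; a, μ), and let c ≥ 0 be such that for every pair i < j with a_{ij} = 1, |θ̲_i − θ̲_j|_{S¹} / π ≥ c · (1 − cos(θ̲_i − θ̲_j)) / 2. Then the rounding expectation of θ̲ satisfies ∑_{1≤i<j≤n} a_{ij} |θ̲_i − θ̲_j|_{S¹} / π ≥ c · W_mc. -/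

import Mathlib

open Real Finset

/-- The circle distance `|x|_{S¹} = min_{k ∈ ℤ} |x - 2πk| ∈ [0, π]`. -/
noncomputable def circleDist (x : ℝ) : ℝ := ⨅ k : ℤ, |x - 2 * Real.pi * k|

/-!
Rewrite `cos x = 1 - 2 · (1 - cos x) / 2` edge by edge: up to the constant `∑ a_ij`, the objective
is `-2` times a relaxed cut weight plus a nonnegative penalty. At the angles `arccos (τ i) ∈ {0, π}`
of a sign vector `τ` the penalty vanishes and the relaxed cut weight is the cut weight of `τ`. Hence
a configuration whose energy is at most the energy of `τ` has relaxed cut weight at least the cut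
weight of `τ`, and the edgewise ratio bound turns relaxed cut weight into rounding expectation.
-/

section PairSum

variable {ι : Type*} [Fintype ι] [LinearOrder ι] {f g : ι → ι → ℝ}

/-- The sum `∑_{i<j} f i j` over unordered pairs, each pair being listed in increasing order. It is
written as a double sum of conditionals so that edge sums in that form unfold to it. -/
noncomputable def pairSum (f : ι → ι → ℝ) : ℝ :=
  ∑ i, ∑ j, if i < j then f i j else 0

theorem pairSum_congr (h : ∀ i j, i < j → f i j = g i j) : pairSum f = pairSum g :=
  sum_congr rfl fun i _ => sum_congr rfl fun j _ => ite_congr rfl (h i j) fun _ => rfl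

theorem pairSum_mono (h : ∀ i j, i < j → f i j ≤ g i j) : pairSum f ≤ pairSum g := by
  refine sum_le_sum fun i _ => sum_le_sum fun j _ => ?_
  split_ifs with hij
  exacts [h i j hij, le_rfl]

theorem pairSum_sub (f g : ι → ι → ℝ) :
    pairSum (fun i j => f i j - g i j) = pairSum f - pairSum g := by
  simp only [pairSum, ← sum_sub_distrib, ite_sub_ite, sub_zero]

theorem pairSum_const_mul (r : ℝ) (f : ι → ι → ℝ) :
    pairSum (fun i j => r * f i j) = r * pairSum f := by
  simp only [pairSum, mul_sum, mul_ite, mul_zero]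

end PairSum

theorem sin_arccos_eq_zero_of_sign {x : ℝ} (hx : x = 1 ∨ x = -1) : sin (arccos x) = 0 := by
  rcases hx with rfl | rfl <;> simp

theorem one_sub_cos_arccos_sub_div_two_of_sign {x y : ℝ} (hx : x = 1 ∨ x = -1)
    (hy : y = 1 ∨ y = -1) :
    (1 - cos (arccos x - arccos y)) / 2 = if x ≠ y then 1 else 0 := by
  rcases hx with rfl | rfl <;> rcases hy with rfl | rfl <;> norm_num

section MaxCut

variable {ι : Type*} [Fintype ι] [LinearOrder ι] {a : ι → ι → ℝ} {μ c : ℝ} {θ τ : ι → ℝ}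

/-- The weight of the cut separating the vertices according to the value of `τ`. Signs are encoded
as the real numbers `1` and `-1`. -/
noncomputable def cutWeight (a : ι → ι → ℝ) (τ : ι → ℝ) : ℝ :=
  pairSum fun i j => if τ i ≠ τ j then a i j else 0

/-- The rank-two relaxation of the cut weight, in which the unit vector at angle `θ i` replaces the
sign of the vertex `i`. -/
noncomputable def relaxedCutWeight (a : ι → ι → ℝ) (θ : ι → ℝ) : ℝ :=
  pairSum fun i j => a i j * ((1 - cos (θ i - θ j)) / 2)

/-- The expected weight of the cut obtained by rounding `θ` with a uniformly random line through the
origin, which separates `θ i` from `θ j` with probability `|θ i - θ j|_{S¹} / π`. -/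
noncomputable def roundingExpectation (a : ι → ι → ℝ) (θ : ι → ℝ) : ℝ :=
  pairSum fun i j => a i j * circleDist (θ i - θ j) / π

/-- The objective `L(θ; a, μ)`, whose penalty term favours the angles in `πℤ`. -/
noncomputable def penalizedEnergy (a : ι → ι → ℝ) (μ : ℝ) (θ : ι → ℝ) : ℝ :=
  pairSum (fun i j => a i j * cos (θ i - θ j)) + μ / 2 * ∑ i, sin (θ i) ^ 2

theorem penalizedEnergy_eq_pairSum_sub_relaxedCutWeight (a : ι → ι → ℝ) (μ : ℝ) (θ : ι → ℝ) :
    penalizedEnergy a μ θ =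
      pairSum a - 2 * relaxedCutWeight a θ + μ / 2 * ∑ i, sin (θ i) ^ 2 := by
  rw [penalizedEnergy, relaxedCutWeight, ← pairSum_const_mul, ← pairSum_sub]
  congr 1
  exact pairSum_congr fun i j _ => by ring

theorem relaxedCutWeight_arccos_of_sign (a : ι → ι → ℝ) (hτ : ∀ i, τ i = 1 ∨ τ i = -1) :
    relaxedCutWeight a (fun i => arccos (τ i)) = cutWeight a τ :=
  pairSum_congr fun i j _ => by
    rw [one_sub_cos_arccos_sub_div_two_of_sign (hτ i) (hτ j), mul_ite, mul_one, mul_zero]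

theorem penalizedEnergy_arccos_of_sign (a : ι → ι → ℝ) (μ : ℝ)
    (hτ : ∀ i, τ i = 1 ∨ τ i = -1) :
    penalizedEnergy a μ (fun i => arccos (τ i)) = pairSum a - 2 * cutWeight a τ := by
  simp only [penalizedEnergy_eq_pairSum_sub_relaxedCutWeight, relaxedCutWeight_arccos_of_sign a hτ,
    sin_arccos_eq_zero_of_sign (hτ _), zero_pow two_ne_zero, sum_const_zero, mul_zero, add_zero]

theorem pairSum_sub_relaxedCutWeight_le_penalizedEnergy (a : ι → ι → ℝ) (hμ : 0 ≤ μ)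
    (θ : ι → ℝ) : pairSum a - 2 * relaxedCutWeight a θ ≤ penalizedEnergy a μ θ := by
  rw [penalizedEnergy_eq_pairSum_sub_relaxedCutWeight]
  exact le_add_of_nonneg_right (by positivity)

theorem cutWeight_le_relaxedCutWeight_of_penalizedEnergy_le (hμ : 0 ≤ μ)
    (hτ : ∀ i, τ i = 1 ∨ τ i = -1)
    (hθ : penalizedEnergy a μ θ ≤ penalizedEnergy a μ fun i => arccos (τ i)) :
    cutWeight a τ ≤ relaxedCutWeight a θ := by
  have hlower := pairSum_sub_relaxedCutWeight_le_penalizedEnergy a hμ θ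
  rw [penalizedEnergy_arccos_of_sign a μ hτ] at hθ
  linarith

theorem mul_relaxedCutWeight_le_roundingExpectation (ha : ∀ i j, i < j → 0 ≤ a i j)
    (hratio : ∀ i j, i < j → 0 < a i j →
      c * ((1 - cos (θ i - θ j)) / 2) ≤ circleDist (θ i - θ j) / π) :
    c * relaxedCutWeight a θ ≤ roundingExpectation a θ := by
  rw [relaxedCutWeight, ← pairSum_const_mul]
  refine pairSum_mono fun i j hij => ?_
  rw [mul_left_comm, mul_div_assoc]
  rcases (ha i j hij).eq_or_lt with hzero | hpos
  · simp only [← hzero, zero_mul, le_refl]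
  · exact mul_le_mul_of_nonneg_left (hratio i j hij hpos) hpos.le

theorem rounding_expectation_of_minimizer_ge_ratio_mul_maxcut_general
    (ha : ∀ i j, i < j → 0 ≤ a i j) (hμ : 0 ≤ μ)
    (hmin : ∀ θ' : ι → ℝ, (∀ i, sin (θ' i) = 0) → penalizedEnergy a μ θ ≤ penalizedEnergy a μ θ')
    (hc : 0 ≤ c)
    (hratio : ∀ i j, i < j → 0 < a i j →
      c * ((1 - cos (θ i - θ j)) / 2) ≤ circleDist (θ i - θ j) / π)
    (hτ : ∀ i, τ i = 1 ∨ τ i = -1) :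
    c * cutWeight a τ ≤ roundingExpectation a θ :=
  calc
    c * cutWeight a τ ≤ c * relaxedCutWeight a θ :=
      mul_le_mul_of_nonneg_left (cutWeight_le_relaxedCutWeight_of_penalizedEnergy_le hμ hτ <|
        hmin _ fun i => sin_arccos_eq_zero_of_sign (hτ i)) hc
    _ ≤ roundingExpectation a θ := mul_relaxedCutWeight_le_roundingExpectation ha hratio

end MaxCut

/-- If `θ̲` is a global minimizer of the penalized max-cut objective
`L(θ; a, μ) = ∑_{i<j} a_ij cos(θ_i - θ_j) + (μ/2) ∑_i sin² θ_i`, and `c ≥ 0` is such that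
`|θ̲_i - θ̲_j|_{S¹} / π ≥ c (1 - cos(θ̲_i - θ̲_j)) / 2` holds on every edge, then the
rounding expectation of `θ̲` is at least `c · W_mc`. -/
theorem rounding_expectation_of_minimizer_ge_ratio_mul_maxcut
    (n : ℕ) (a : Fin n → Fin n → ℝ)
    (hsym : ∀ i j, a i j = a j i) (hdiag : ∀ i, a i i = 0)
    (h01 : ∀ i j, a i j = 0 ∨ a i j = 1)
    (μ : ℝ) (hμ : 0 ≤ μ)
    (L : (Fin n → ℝ) → ℝ)
    (hL : ∀ θ : Fin n → ℝ,
      L θ = (∑ i : Fin n, ∑ j : Fin n, if i < j then a i j * Real.cos (θ i - θ j) else 0)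
        + μ / 2 * ∑ i : Fin n, Real.sin (θ i) ^ 2)
    (θmin : Fin n → ℝ) (hmin : ∀ θ : Fin n → ℝ, L θmin ≤ L θ)
    (c : ℝ) (hc : 0 ≤ c)
    (hratio : ∀ i j : Fin n, i < j → a i j = 1 →
        c * ((1 - Real.cos (θmin i - θmin j)) / 2)
          ≤ circleDist (θmin i - θmin j) / Real.pi)
    (Wmc : ℝ)
    (hW : IsGreatest {w : ℝ | ∃ τ : Fin n → ℝ, (∀ i, τ i = 1 ∨ τ i = -1) ∧
        w = ∑ i : Fin n, ∑ j : Fin n, if i < j ∧ τ i ≠ τ j then a i j else 0} Wmc) :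
    c * Wmc ≤ ∑ i : Fin n, ∑ j : Fin n,
        if i < j then a i j * circleDist (θmin i - θmin j) / Real.pi else 0 := by
  obtain ⟨⟨τ, hτ, rfl⟩, -⟩ := hW
  obtain rfl : L = penalizedEnergy a μ := funext hL
  simpa only [cutWeight, roundingExpectation, pairSum, ite_and] using
    rounding_expectation_of_minimizer_ge_ratio_mul_maxcut_general
      (fun i j _ => (h01 i j).elim Eq.ge fun h => h ▸ zero_le_one) hμ (fun θ' _ => hmin θ') hc
      (fun i j hij hpos => hratio i j hij ((h01 i j).resolve_left hpos.ne')) hτ
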